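/- Let n ≥ 1, d ≥ 1, and let y, y' be permutations of {1,…,n} such that the n-composition of Des(y'⁻¹) is a rearrangement of the n-composition of Des(y⁻¹) (i.e., Des(y⁻¹) and Des(y'⁻¹) have the same n-partition). Then b_{n,d}(y) = b_{n,d}(y'), i.e., the number of normal sequences of length d ending with y equals the number of normal sequences of length d ending with y'. -/

import Mathlib

/-!
Deleting the last entry `y` of a normal sequence gives
`b_{n,d+1}(y) = ∑ b_{n,d}(x)`, summed over the `x` with `Des(y⁻¹) ⊆ Des(x)`. By induction on `d` the
summand depends only on `Des(x⁻¹)`, so it suffices that the distribution of `Des(x⁻¹)` over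
`{x | I ⊆ Des(x)}` depends only on the `n`-partition of `I`. By Möbius inversion this follows once
the number of `x` with `I ⊆ Des(x)` and `J ⊆ Des(x⁻¹)` depends only on `J` and that partition.

The set `I` cuts the positions `1, …, n` into blocks of consecutive positions, whose lengths form
the `n`-composition of `I`, and `I ⊆ Des(x)` says that `x` is decreasing on each block. Such an `x`
is determined by the word whose `v`-th letter is the block of `I` containing the position `x⁻¹(v)`,
a rearrangement of the word for `x = 1`, and `J ⊆ Des(x⁻¹)` says that this word is weakly decreasing
on each block of `J`. If `I` and `I'` have the same `n`-partition, relabelling the letters by a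
bijection between blocks of equal length and then sorting again inside each block of `J` is a
bijection between the two sets of words.
-/

/-- The descent set of a permutation `f` of `{1,…,n}` (realized as `Equiv.Perm (Fin n)`
with 1-based positions: position `i` is the index `i-1` of `Fin n`):
`Des f = {i : 1 ≤ i ≤ n-1 and f(i) > f(i+1)}`. -/
def Des {n : ℕ} (f : Equiv.Perm (Fin n)) : Finset ℕ :=
  (Finset.Ico 1 n).filter fun i =>
    ∃ h : i < n, f ⟨i, h⟩ < f ⟨i - 1, Nat.lt_of_le_of_lt (Nat.sub_le i 1) h⟩

/-- A sequence `(f₁,…,f_d)` of permutations of `{1,…,n}` is normal if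
`Des (f_{k+1}⁻¹) ⊆ Des (f_k)` holds for every `1 ≤ k < d`. -/
def IsNormalSeq {n d : ℕ} (f : Fin d → Equiv.Perm (Fin n)) : Prop :=
  ∀ (k : ℕ) (h : k + 1 < d),
    Des (f ⟨k + 1, h⟩)⁻¹ ⊆ Des (f ⟨k, Nat.lt_of_succ_lt h⟩)

/-- `b n d`: the number of normal sequences of length `d` of permutations of `{1,…,n}`. -/
noncomputable def b (n d : ℕ) : ℕ :=
  Nat.card {f : Fin d → Equiv.Perm (Fin n) // IsNormalSeq f}

/-- `bx n d y`: the number of normal sequences of length `d` of permutations of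
`{1,…,n}` whose last entry is `y`. -/
noncomputable def bx (n d : ℕ) (y : Equiv.Perm (Fin n)) : ℕ :=
  Nat.card {f : Fin d → Equiv.Perm (Fin n) //
    IsNormalSeq f ∧ ∀ h : 0 < d, f ⟨d - 1, Nat.sub_lt h Nat.one_pos⟩ = y}

/-- The `n`-composition of a subset `I` of `{1,…,n-1}`: the list
`(p₁, p₂ - p₁, …, p_k - p_{k-1})` where `p₁ < p₂ < … < p_k` is the increasing
enumeration of `{1,…,n} \ I`. -/
def ncomp (n : ℕ) (I : Finset ℕ) : List ℕ :=
  let P := ((Finset.Icc 1 n) \ I).sort (· ≤ ·)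
  List.zipWith (· - ·) P (0 :: P)

section Words

variable {n : ℕ} {α β γ : Type*}

/-- The word of pairs `(c i, w i)`, compared lexicographically with the second coordinate reversed.
Reading the fibres of a monotone `c` as blocks, this word is monotone exactly when `w` is weakly
decreasing on every block. -/
def antilex {ι : Type*} (c : ι → α) (w : ι → β) (i : ι) : α ×ₗ βᵒᵈ :=
  toLex (c i, OrderDual.toDual (w i))

theorem antilex_le_antilex_iff {ι : Type*} [LT α] [LE β] {c : ι → α} {w : ι → β} {i j : ι} :
    antilex c w i ≤ antilex c w j ↔ c i < c j ∨ c i = c j ∧ w j ≤ w i :=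
  Prod.Lex.le_iff

theorem eq_of_antilex_eq {ι : Type*} {c c' : ι → α} {w w' : ι → β}
    (h : antilex c w = antilex c' w') : w = w' :=
  funext fun i => congrArg (fun p : α ×ₗ βᵒᵈ => OrderDual.ofDual (ofLex p).2) (congrFun h i)

theorem antilex_comp_symm_id_comp {ι κ : Type*} (a : ι → α) (x : ι ≃ κ) :
    antilex (a ∘ x.symm) id ∘ x = antilex a x :=
  funext fun i => congrArg (fun j => toLex (a j, OrderDual.toDual (x i))) (x.symm_apply_apply i)

theorem monotone_of_monotone_antilex {ι : Type*} [Preorder ι] [PartialOrder α] [Preorder β]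
    {c : ι → α} {w : ι → β} (h : Monotone (antilex c w)) : Monotone c :=
  fun _ _ hij => Prod.Lex.monotone_fst _ _ (h hij)

theorem monotone_antilex_iff {ι : Type*} [Preorder ι] [PartialOrder α] [Preorder β]
    {c : ι → α} {w : ι → β} (hc : Monotone c) :
    Monotone (antilex c w) ↔ ∀ ⦃i j⦄, i ≤ j → c i = c j → w j ≤ w i := by
  refine ⟨fun h i j hij hcij => ?_, fun h i j hij => antilex_le_antilex_iff.2 ?_⟩
  · exact ((antilex_le_antilex_iff.1 (h hij)).resolve_left hcij.not_lt).2
  · exact (hc hij).lt_or_eq.imp_right fun hcij => ⟨hcij, h hij hcij⟩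

/-- The word obtained from `w` by rearranging the letters inside each block of the monotone word
`c` into decreasing order. -/
def sortBlocks [LinearOrder α] [LinearOrder β] (c : Fin n → α) (w : Fin n → β) : Fin n → β :=
  w ∘ Tuple.sort (antilex c w)

section sortBlocks

variable [LinearOrder α] [LinearOrder β] [LinearOrder γ] {c : Fin n → α}

theorem comp_sort_antilex (hc : Monotone c) (w : Fin n → β) :
    c ∘ Tuple.sort (antilex c w) = c :=
  Tuple.unique_monotone (τ := 1)
    (monotone_of_monotone_antilex (Tuple.monotone_sort (antilex c w))) hc

theorem antilex_sortBlocks (hc : Monotone c) (w : Fin n → β) :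
    antilex c (sortBlocks c w) = antilex c w ∘ Tuple.sort (antilex c w) :=
  congrArg (fun c' => antilex c' (sortBlocks c w)) (comp_sort_antilex hc w).symm

theorem monotone_antilex_sortBlocks (hc : Monotone c) (w : Fin n → β) :
    Monotone (antilex c (sortBlocks c w)) :=
  antilex_sortBlocks hc w ▸ Tuple.monotone_sort _

theorem sortBlocks_eq_self {w : Fin n → β} (hw : Monotone (antilex c w)) :
    sortBlocks c w = w := by
  rw [sortBlocks, Tuple.sort_eq_refl_iff_monotone.2 hw, Equiv.coe_refl, Function.comp_id]

theorem sortBlocks_comp_perm (hc : Monotone c) (w : Fin n → β) {σ : Equiv.Perm (Fin n)}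
    (hσ : c ∘ σ = c) : sortBlocks c (w ∘ σ) = sortBlocks c w := by
  have hwσ : antilex c (w ∘ σ) = antilex c w ∘ σ :=
    congrArg (fun c' => antilex c' (w ∘ σ)) hσ.symm
  apply eq_of_antilex_eq
  calc antilex c (sortBlocks c (w ∘ σ))
      = (antilex c w ∘ σ) ∘ Tuple.sort (antilex c w ∘ σ) := by rw [antilex_sortBlocks hc, hwσ]
    _ = antilex c w ∘ Tuple.sort (antilex c w) := Tuple.comp_perm_comp_sort_eq_comp_sort
    _ = antilex c (sortBlocks c w) := (antilex_sortBlocks hc w).symm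

theorem sortBlocks_comp_sortBlocks (hc : Monotone c) (f : β → γ) (w : Fin n → β) :
    sortBlocks c (f ∘ sortBlocks c w) = sortBlocks c (f ∘ w) :=
  sortBlocks_comp_perm hc (f ∘ w) (comp_sort_antilex hc w)

/-- The rearrangements of the word `a` that are weakly decreasing on every block of `c`. -/
def decreasingRearrangements (c : Fin n → α) (a : Fin n → β) : Set (Fin n → β) :=
  {w | (∃ σ : Equiv.Perm (Fin n), w = a ∘ σ) ∧ Monotone (antilex c w)}

theorem mapsTo_sortBlocks_comp (hc : Monotone c) {a : Fin n → β} {a' : Fin n → γ} {f : β → γ}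
    {g : Equiv.Perm (Fin n)} (h : a' ∘ g = f ∘ a) :
    Set.MapsTo (fun w => sortBlocks c (f ∘ w)) (decreasingRearrangements c a)
      (decreasingRearrangements c a') := by
  rintro _ ⟨⟨σ, rfl⟩, -⟩
  refine ⟨⟨g * σ * Tuple.sort (antilex c (f ∘ a ∘ σ)), ?_⟩, monotone_antilex_sortBlocks hc _⟩
  exact congrArg (· ∘ σ ∘ Tuple.sort (antilex c (f ∘ a ∘ σ))) h.symm

theorem leftInvOn_sortBlocks_comp (hc : Monotone c) (a : Fin n → β) (τ : β ≃ γ) :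
    Set.LeftInvOn (fun w => sortBlocks c (τ.symm ∘ w)) (fun w => sortBlocks c (τ ∘ w))
      (decreasingRearrangements c a) := by
  rintro w ⟨-, hw⟩
  calc sortBlocks c (τ.symm ∘ sortBlocks c (τ ∘ w))
      = sortBlocks c (τ.symm ∘ τ ∘ w) := sortBlocks_comp_sortBlocks hc _ _
    _ = sortBlocks c w := by rw [← Function.comp_assoc, τ.symm_comp_self, Function.id_comp]
    _ = w := sortBlocks_eq_self hw

theorem ncard_decreasingRearrangements_congr (hc : Monotone c) {a : Fin n → β} {a' : Fin n → γ}
    (τ : β ≃ γ) {g : Equiv.Perm (Fin n)} (h : a' ∘ g = τ ∘ a) :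
    (decreasingRearrangements c a).ncard = (decreasingRearrangements c a').ncard := by
  have h' : a ∘ g.symm = τ.symm ∘ a' := by
    rw [Equiv.comp_symm_eq, Function.comp_assoc, h, ← Function.comp_assoc, τ.symm_comp_self,
      Function.id_comp]
  exact (Set.InvOn.bijOn
    ⟨leftInvOn_sortBlocks_comp hc a τ, leftInvOn_sortBlocks_comp hc a' τ.symm⟩
    (mapsTo_sortBlocks_comp hc h) (mapsTo_sortBlocks_comp hc h')).ncard_eq

end sortBlocks

section Standardization

variable [LinearOrder α] [LinearOrder β] {a : Fin n → α} {c : Fin n → β}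

/-- Inside a single block of `a`, the values of `x` are in the reverse order of their positions, so
comparing the positions of two values amounts to comparing the blocks that contain them. -/
theorem monotone_antilex_symm_iff {x : Equiv.Perm (Fin n)} (hx : Monotone (antilex a x))
    (hc : Monotone c) :
    Monotone (antilex c x.symm) ↔ Monotone (antilex c (a ∘ x.symm)) := by
  have ha : Monotone a := monotone_of_monotone_antilex hx
  rw [monotone_antilex_iff hc, monotone_antilex_iff hc]
  refine ⟨fun h u v huv hcuv => ha (h huv hcuv), fun h u v huv hcuv => ?_⟩
  by_contra! hlt
  have hblock : a (x.symm u) = a (x.symm v) := (ha hlt.le).antisymm (h huv hcuv)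
  have hvu : v ≤ u := by
    simpa only [Equiv.apply_symm_apply] using (monotone_antilex_iff ha).1 hx hlt.le hblock
  exact hlt.ne (congrArg x.symm (huv.antisymm hvu))

/-- Standardization: `x` is recovered from the word `w = a ∘ x⁻¹` by sorting the pairs
`(w v, v)`. -/
theorem bijOn_comp_symm (ha : Monotone a) (hc : Monotone c) :
    Set.BijOn (fun x : Equiv.Perm (Fin n) => a ∘ x.symm)
      {x | Monotone (antilex a x) ∧ Monotone (antilex c x.symm)}
      (decreasingRearrangements c a) := by
  refine ⟨?_, ?_, ?_⟩
  · rintro x ⟨hx, hxc⟩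
    exact ⟨⟨x.symm, rfl⟩, (monotone_antilex_symm_iff hx hc).1 hxc⟩
  · rintro x ⟨hx, -⟩ z ⟨hz, -⟩ (hxz : a ∘ x.symm = a ∘ z.symm)
    rw [← antilex_comp_symm_id_comp] at hx hz
    rw [← hxz] at hz
    have hsort : antilex ((a ∘ x.symm) ∘ x) x = antilex ((a ∘ x.symm) ∘ z) z :=
      Tuple.unique_monotone hx hz
    exact Equiv.coe_fn_injective (eq_of_antilex_eq hsort)
  · rintro w ⟨⟨σ, rfl⟩, hw⟩
    set x := Tuple.sort (antilex (a ∘ σ) id)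
    have hx : Monotone (antilex ((a ∘ σ) ∘ x) x) := Tuple.monotone_sort (antilex (a ∘ σ) id)
    have hxa : (a ∘ σ) ∘ x = a :=
      Tuple.unique_monotone (σ := σ * x) (τ := 1) (monotone_of_monotone_antilex hx) ha
    rw [hxa] at hx
    have hxw : a ∘ x.symm = a ∘ σ := (Equiv.comp_symm_eq ..).2 hxa.symm
    exact ⟨x, ⟨hx, (monotone_antilex_symm_iff hx hc).2 (hxw ▸ hw)⟩, hxw⟩

end Standardization

end Words

theorem multiset_eq_of_countP_le_eq {α : Type*} [PartialOrder α] [DecidableLE α] {M N : Multiset α}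
    (h : ∀ a ∈ M + N, M.countP (a ≤ ·) = N.countP (a ≤ ·)) : M = N := by
  classical
  induction M using Multiset.strongInductionOn generalizing N with
  | ih M ih =>
    rcases (M + N).toFinset.eq_empty_or_nonempty with hempty | hne
    · obtain ⟨rfl, rfl⟩ := add_eq_zero.1 (Multiset.toFinset_eq_empty.1 hempty)
      rfl
    -- At a maximal `a` both counts are multiplicities, so `a` can be removed from both sides.
    obtain ⟨a, ha, hmax⟩ := Finset.exists_maximal hne
    have count_eq {K : Multiset α} (hK : K ≤ M + N) : K.countP (a ≤ ·) = K.count a :=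
      Multiset.countP_congr rfl fun b hb => propext ⟨fun hab => hab.antisymm
        (hmax (Multiset.mem_toFinset.2 (Multiset.mem_of_le hK hb)) hab), fun hab => hab.le⟩
    rw [Multiset.mem_toFinset] at ha
    have hcount : M.count a = N.count a := by
      rw [← count_eq (Multiset.le_add_right M N), h a ha, count_eq (Multiset.le_add_left N M)]
    have hpos : 0 < M.count a + N.count a := Multiset.count_add a M N ▸ Multiset.count_pos.2 ha
    obtain ⟨M, rfl⟩ := Multiset.exists_cons_of_mem (Multiset.count_pos.1 (by omega : 0 < M.count a))
    obtain ⟨N, rfl⟩ := Multiset.exists_cons_of_mem (Multiset.count_pos.1 (by omega : 0 < N.count a))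
    rw [ih M (Multiset.lt_cons_self M a) fun b hb => ?_]
    have hb' : b ∈ a ::ₘ M + a ::ₘ N :=
      Multiset.mem_of_le (add_le_add (Multiset.le_cons_self M a) (Multiset.le_cons_self N a)) hb
    simpa only [Multiset.countP_cons, Nat.add_right_cancel_iff] using h b hb'

/-- The number, counted from `0`, of the block of `I` that contains the position `i`, where the
`1`-based positions `p` and `p + 1` lie in the same block exactly when `p ∈ I`. Since `i` is the
`1`-based position `i + 1`, this number is that of the `p ∉ I` with `1 ≤ p ≤ i`. -/
def blockIndex {n : ℕ} (I : Finset ℕ) (i : Fin n) : ℕ :=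
  Nat.count (fun j => j + 1 ∉ I) i

section Blocks

variable {n : ℕ} {I : Finset ℕ}

theorem monotone_blockIndex (I : Finset ℕ) : Monotone (blockIndex I : Fin n → ℕ) :=
  fun _ _ h => Nat.count_monotone _ h

theorem blockIndex_succ (I : Finset ℕ) (i : Fin n) :
    blockIndex I i.succ = blockIndex I i.castSucc + if (i : ℕ) + 1 ∈ I then 0 else 1 := by
  simp only [blockIndex, Fin.val_succ, Fin.val_castSucc, Nat.count_succ, ite_not]

theorem Des_subset (x : Equiv.Perm (Fin n)) : Des x ⊆ Finset.Ico 1 n :=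
  Finset.filter_subset _ _

theorem succ_mem_Des_iff {x : Equiv.Perm (Fin (n + 1))} {i : Fin n} :
    (i : ℕ) + 1 ∈ Des x ↔ x i.succ ≤ x i.castSucc := by
  have hi : (i : ℕ) + 1 < n + 1 := i.succ.isLt
  have hne : x i.succ ≠ x i.castSucc := x.injective.ne i.castSucc_lt_succ.ne'
  rw [hne.le_iff_lt]
  simp only [Des, Finset.mem_filter, Finset.mem_Ico, Nat.le_add_left, hi, and_self, true_and,
    exists_true_left]
  rfl

theorem subset_Des_iff (hI : I ⊆ Finset.Ico 1 n) (x : Equiv.Perm (Fin n)) :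
    I ⊆ Des x ↔ Monotone (antilex (blockIndex I) x) := by
  cases n with
  | zero => simp [Finset.subset_empty.1 hI, Subsingleton.monotone]
  | succ n =>
    have le_succ_iff (i : Fin n) : antilex (blockIndex I) x i.castSucc ≤
        antilex (blockIndex I) x i.succ ↔ ((i : ℕ) + 1 ∈ I → (i : ℕ) + 1 ∈ Des x) := by
      rw [antilex_le_antilex_iff, blockIndex_succ, succ_mem_Des_iff]
      split_ifs with hi <;> simp [hi]
    simp only [Fin.monotone_iff_le_succ, le_succ_iff]
    refine ⟨fun h i hi => h hi, fun h p hp => ?_⟩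
    obtain ⟨hp1, hpn⟩ := Finset.mem_Ico.1 (hI hp)
    obtain ⟨j, rfl⟩ := Nat.exists_eq_add_of_le' hp1
    exact h ⟨j, Nat.lt_of_succ_lt_succ hpn⟩ hp

theorem countP_le_eq_zero_of_lt {α : Type*} [LinearOrder α] {p i : α} {Q : List α}
    (hQ : (p :: Q).Pairwise (· < ·)) (hi : i < p) : (p :: Q).countP (· ≤ i) = 0 := by
  simp only [List.countP_eq_zero, List.mem_cons, decide_eq_true_eq, not_le]
  rintro q (rfl | hq)
  exacts [hi, hi.trans (List.rel_of_pairwise_cons hQ hq)]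

theorem card_filter_countP_eq {P : List ℕ} {s n : ℕ} (hP : (s :: P).Pairwise (· < ·))
    (hn : n ∈ s :: P) (hmax : ∀ q ∈ s :: P, q ≤ n) (a : ℕ) :
    ((Finset.Ico s n).filter fun i => P.countP (· ≤ i) = a).card =
      (List.zipWith (· - ·) P (s :: P))[a]?.getD 0 := by
  induction P generalizing s a with
  | nil => simp_all
  | cons p Q ih =>
    have hsp : s < p := List.rel_of_pairwise_cons hP List.mem_cons_self
    have hpQ : (p :: Q).Pairwise (· < ·) := hP.of_cons
    have hpn : p ≤ n := hmax p (by simp)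
    have hns : n ∈ p :: Q := (List.mem_cons.1 hn).resolve_left (hsp.trans_le hpn).ne'
    have countP_of_le {i : ℕ} (hi : p ≤ i) :
        (p :: Q).countP (· ≤ i) = Q.countP (· ≤ i) + 1 :=
      List.countP_cons_of_pos (by simpa using hi)
    cases a with
    | zero =>
      have : (Finset.Ico s n).filter (fun i => (p :: Q).countP (· ≤ i) = 0) = Finset.Ico s p := by
        ext i
        rcases lt_or_ge i p with hi | hi
        · simp only [Finset.mem_filter, Finset.mem_Ico, and_true,
            countP_le_eq_zero_of_lt hpQ hi]
          omega
        · simp only [Finset.mem_filter, Finset.mem_Ico, countP_of_le hi]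
          omega
      rw [this]
      simp
    | succ a =>
      have : (Finset.Ico s n).filter (fun i => (p :: Q).countP (· ≤ i) = a + 1) =
          (Finset.Ico p n).filter (fun i => Q.countP (· ≤ i) = a) := by
        ext i
        rcases lt_or_ge i p with hi | hi
        · simp only [Finset.mem_filter, Finset.mem_Ico, countP_le_eq_zero_of_lt hpQ hi]
          omega
        · simp only [Finset.mem_filter, Finset.mem_Ico, countP_of_le hi]
          omega
      rw [this, ih hpQ hns (fun q hq => hmax q (List.mem_cons_of_mem s hq))]
      simp

theorem blockIndex_eq_countP_sort (I : Finset ℕ) (i : Fin n) :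
    blockIndex I i = ((Finset.Icc 1 n \ I).sort (· ≤ ·)).countP (· ≤ (i : ℕ)) := by
  rw [← Multiset.coe_countP, Finset.sort_eq, Multiset.countP_eq_card_filter, ← Finset.filter_val,
    Finset.card_val, blockIndex, Nat.count_eq_card_filter_range]
  refine Finset.card_nbij' (· + 1) (· - 1) ?_ ?_ ?_ ?_ <;> intro j hj <;>
    simp only [Finset.coe_filter, Finset.mem_range, Finset.mem_sdiff, Finset.mem_Icc,
      Set.mem_ofPred_eq] at hj ⊢
  · exact ⟨⟨by omega, hj.2⟩, by omega⟩
  · rw [Nat.sub_add_cancel hj.1.1.1]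
    exact ⟨by omega, hj.1.2⟩
  · omega
  · omega

theorem card_blockIndex_eq (hI : I ⊆ Finset.Ico 1 n) (a : ℕ) :
    Fintype.card {i : Fin n // blockIndex I i = a} = (ncomp n I)[a]?.getD 0 := by
  set P := (Finset.Icc 1 n \ I).sort (· ≤ ·) with hP
  have mem_P {q : ℕ} : q ∈ P ↔ (1 ≤ q ∧ q ≤ n) ∧ q ∉ I := by simp [hP]
  have hsorted : (0 :: P).Pairwise (· < ·) :=
    List.pairwise_cons.2 ⟨fun q hq => (mem_P.1 hq).1.1, (Finset.sortedLT_sort _).pairwise⟩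
  have hn : n ∈ 0 :: P := by
    rcases n.eq_zero_or_pos with h0 | h0
    · simp [h0]
    · exact List.mem_cons_of_mem _ (mem_P.2 ⟨⟨h0, le_rfl⟩, fun h => by simpa using hI h⟩)
  have hmax : ∀ q ∈ 0 :: P, q ≤ n := by
    simp only [List.mem_cons, mem_P]
    omega
  rw [ncomp, ← card_filter_countP_eq hsorted hn hmax, Fintype.card_subtype]
  simp only [blockIndex_eq_countP_sort]
  rw [← Finset.card_map Fin.valEmbedding]
  congr 1
  ext i
  simp only [Finset.mem_map, Finset.mem_filter, Finset.mem_univ, Fin.valEmbedding_apply,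
    Fin.exists_iff, Finset.mem_Ico, Nat.zero_le, true_and, ← hP]
  constructor
  · rintro ⟨j, hj, hja, rfl⟩
    exact ⟨hj, hja⟩
  · rintro ⟨hi, hia⟩
    exact ⟨i, hi, hia, rfl⟩

end Blocks

theorem exists_perm_getElem?_eq {α : Type*} {l l' : List α} (h : l.Perm l') :
    ∃ σ : Equiv.Perm ℕ, ∀ a, l'[σ a]? = l[a]? := by
  induction h with
  | nil => exact ⟨1, fun _ => rfl⟩
  | cons x _ ih =>
    obtain ⟨σ, hσ⟩ := ih
    refine ⟨⟨fun | 0 => 0 | k + 1 => σ k + 1, fun | 0 => 0 | k + 1 => σ.symm k + 1, ?_, ?_⟩, ?_⟩ <;>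
      rintro (_ | k) <;> simp [hσ]
  | swap x y l =>
    refine ⟨Equiv.swap 0 1, ?_⟩
    rintro (_ | _ | k)
    · simp
    · simp
    · simp [Equiv.swap_apply_of_ne_of_ne]
  | trans _ _ ih₁ ih₂ =>
    obtain ⟨σ, hσ⟩ := ih₁
    obtain ⟨τ, hτ⟩ := ih₂
    exact ⟨σ.trans τ, fun a => (hτ (σ a)).trans (hσ a)⟩

theorem exists_equiv_comp_eq {ι κ α : Type*} [Fintype ι] [Fintype κ] [DecidableEq α] {f : ι → α}
    {g : κ → α}
    (h : ∀ a, Fintype.card {i // f i = a} = Fintype.card {k // g k = a}) :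
    ∃ e : ι ≃ κ, g ∘ e = f :=
  ⟨Equiv.ofFiberEquiv fun a => Fintype.equivOfCardEq (h a),
    funext fun i => Equiv.ofFiberEquiv_map _ i⟩

theorem exists_blockIndex_comp_eq {n : ℕ} {I I' : Finset ℕ} (hI : I ⊆ Finset.Ico 1 n)
    (hI' : I' ⊆ Finset.Ico 1 n) (h : (ncomp n I).Perm (ncomp n I')) :
    ∃ (τ : Equiv.Perm ℕ) (g : Equiv.Perm (Fin n)), blockIndex I' ∘ g = τ ∘ blockIndex I := by
  obtain ⟨τ, hτ⟩ := exists_perm_getElem?_eq h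
  refine ⟨τ, exists_equiv_comp_eq fun a => ?_⟩
  obtain ⟨a, rfl⟩ := τ.surjective a
  simp only [Function.comp_apply, τ.apply_eq_iff_eq, card_blockIndex_eq hI,
    card_blockIndex_eq hI', hτ]


section Counting

variable {n : ℕ} {I I' J : Finset ℕ}

theorem card_filter_subset_Des (hI : I ⊆ Finset.Ico 1 n) (hJ : J ⊆ Finset.Ico 1 n) :
    (Finset.univ.filter fun x : Equiv.Perm (Fin n) => I ⊆ Des x ∧ J ⊆ Des x⁻¹).card =
      (decreasingRearrangements (blockIndex J : Fin n → ℕ) (blockIndex I)).ncard := by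
  rw [← (bijOn_comp_symm (monotone_blockIndex I) (monotone_blockIndex J)).ncard_eq,
    ← Set.ncard_coe_finset]
  simp only [Finset.coe_filter_univ, subset_Des_iff hI, subset_Des_iff hJ, Equiv.Perm.coe_inv]

theorem map_Des_inv_eq_of_ncomp_perm (hI : I ⊆ Finset.Ico 1 n) (hI' : I' ⊆ Finset.Ico 1 n)
    (h : (ncomp n I).Perm (ncomp n I')) :
    (Finset.univ.filter fun x : Equiv.Perm (Fin n) => I ⊆ Des x).val.map (fun x => Des x⁻¹) =
      (Finset.univ.filter fun x : Equiv.Perm (Fin n) => I' ⊆ Des x).val.map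
        (fun x => Des x⁻¹) := by
  obtain ⟨τ, g, hτg⟩ := exists_blockIndex_comp_eq hI hI' h
  refine multiset_eq_of_countP_le_eq fun J hJ => ?_
  have hJn : J ⊆ Finset.Ico 1 n := by
    rcases Multiset.mem_add.1 hJ with hJ | hJ <;>
    · obtain ⟨x, -, rfl⟩ := Multiset.mem_map.1 hJ
      exact Des_subset _
  simp only [Multiset.countP_map, ← Finset.filter_val, Finset.card_val, Finset.filter_filter]
  rw [card_filter_subset_Des hI hJn, card_filter_subset_Des hI' hJn,
    ncard_decreasingRearrangements_congr (monotone_blockIndex J) τ hτg]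

theorem sum_eq_of_ncomp_perm {M : Type*} [AddCommMonoid M]
    {f : Equiv.Perm (Fin n) → M} (hf : f.FactorsThrough fun x => Des x⁻¹)
    (hI : I ⊆ Finset.Ico 1 n) (hI' : I' ⊆ Finset.Ico 1 n)
    (h : (ncomp n I).Perm (ncomp n I')) :
    ∑ x with I ⊆ Des x, f x = ∑ x with I' ⊆ Des x, f x := by
  obtain ⟨F, rfl⟩ := (Function.factorsThrough_iff f).1 hf
  simpa only [Multiset.map_map, Finset.sum_eq_multiset_sum] using
    congrArg (fun m => (m.map F).sum) (map_Des_inv_eq_of_ncomp_perm hI hI' h)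

end Counting

section NormalSequences

variable {n d : ℕ}

theorem isNormalSeq_iff_forall_fin {f : Fin (d + 1) → Equiv.Perm (Fin n)} :
    IsNormalSeq f ↔ ∀ k : Fin d, Des (f k.succ)⁻¹ ⊆ Des (f k.castSucc) :=
  ⟨fun h k => h k k.succ.isLt, fun h k hk => h ⟨k, Nat.lt_of_succ_lt_succ hk⟩⟩

theorem isNormalSeq_snoc_iff {f : Fin (d + 1) → Equiv.Perm (Fin n)} {y : Equiv.Perm (Fin n)} :
    IsNormalSeq (Fin.snoc f y : Fin (d + 2) → Equiv.Perm (Fin n)) ↔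
      IsNormalSeq f ∧ Des y⁻¹ ⊆ Des (f (Fin.last d)) := by
  simp only [isNormalSeq_iff_forall_fin, Fin.forall_fin_succ', Fin.succ_castSucc, Fin.succ_last,
    Fin.snoc_castSucc, Fin.snoc_last]

theorem bx_add_one (y : Equiv.Perm (Fin n)) :
    bx n (d + 1) y = Nat.card {f : Fin (d + 1) → Equiv.Perm (Fin n) //
      IsNormalSeq f ∧ f (Fin.last d) = y} := by
  simp only [bx, Nat.zero_lt_succ, forall_true_left]
  rfl

theorem bx_one (y : Equiv.Perm (Fin n)) : bx n 1 y = 1 := by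
  rw [bx_add_one, Nat.card_eq_one_iff_exists]
  refine ⟨⟨fun _ => y, isNormalSeq_iff_forall_fin.2 finZeroElim, rfl⟩, ?_⟩
  rintro ⟨f, -, rfl⟩
  exact Subtype.ext (funext fun i => congrArg f (Subsingleton.elim (α := Fin 1) i _))

theorem bx_add_two (y : Equiv.Perm (Fin n)) :
    bx n (d + 2) y = ∑ x with Des y⁻¹ ⊆ Des x, bx n (d + 1) x := by
  classical
  simp only [bx_add_one, Nat.card_eq_fintype_card, Fintype.card_subtype]
  calc (Finset.univ.filter fun f : Fin (d + 2) → Equiv.Perm (Fin n) =>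
          IsNormalSeq f ∧ f (Fin.last (d + 1)) = y).card
      = (Finset.univ.filter fun f : Fin (d + 1) → Equiv.Perm (Fin n) =>
          IsNormalSeq f ∧ Des y⁻¹ ⊆ Des (f (Fin.last d))).card := by
        refine Finset.card_nbij' Fin.init (fun f => Fin.snoc f y) ?_ ?_ ?_ ?_ <;>
          simp only [Set.MapsTo, Set.LeftInvOn, Finset.coe_filter_univ, Set.mem_ofPred_eq]
        · rintro f ⟨hf, rfl⟩
          exact isNormalSeq_snoc_iff.1 ((Fin.snoc_init_self f).symm ▸ hf)
        · exact fun f hf => ⟨isNormalSeq_snoc_iff.2 hf, Fin.snoc_last ..⟩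
        · rintro f ⟨-, rfl⟩
          exact Fin.snoc_init_self f
        · exact fun f _ => Fin.init_snoc ..
    _ = ∑ x with Des y⁻¹ ⊆ Des x, (Finset.univ.filter fun f : Fin (d + 1) → Equiv.Perm (Fin n) =>
          IsNormalSeq f ∧ f (Fin.last d) = x).card := by
        rw [Finset.card_eq_sum_card_fiberwise (f := fun f => f (Fin.last d))
          (t := {x | Des y⁻¹ ⊆ Des x}) fun f hf => by simpa using (Finset.mem_filter.1 hf).2.2]
        refine Finset.sum_congr rfl fun x hx => ?_
        rw [Finset.filter_filter]
        refine congrArg Finset.card (Finset.filter_congr fun f _ => ?_)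
        constructor
        · rintro ⟨⟨hf, -⟩, hfx⟩
          exact ⟨hf, hfx⟩
        · rintro ⟨hf, rfl⟩
          exact ⟨⟨hf, (Finset.mem_filter.1 hx).2⟩, rfl⟩

end NormalSequences


/-- If `Des (y⁻¹)` and `Des (y'⁻¹)` have the same `n`-partition (their
`n`-compositions are rearrangements of one another), then `b_{n,d}(y) = b_{n,d}(y')`. -/
theorem bx_depends_only_on_partition (n d : ℕ) (hn : 1 ≤ n) (hd : 1 ≤ d)
    (y y' : Equiv.Perm (Fin n))
    (h : (ncomp n (Des y⁻¹)).Perm (ncomp n (Des y'⁻¹))) :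
    bx n d y = bx n d y' := by
  obtain ⟨d, rfl⟩ := Nat.exists_eq_add_of_le' hd
  induction d generalizing y y' with
  | zero => rw [bx_one, bx_one]
  | succ d ih =>
    have hF : (bx n (d + 1)).FactorsThrough fun x => Des x⁻¹ := fun x z hxz =>
      ih x z (List.Perm.of_eq (congrArg (ncomp n) hxz)) (Nat.le_add_left 1 d)
    rw [bx_add_two, bx_add_two, sum_eq_of_ncomp_perm hF (Des_subset _) (Des_subset _) h]
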